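/- Let M ∈ (1/2)ℕ, r ∈ M+ℤ, τ in the upper half-plane, and z ∈ ℂ with ζ = e^{2πiz}, q = e^{2πiτ}. Then ϑ⁺_{r,0,M}(z;τ) + ϑ⁺_{−r−2M,0,M}(−z;τ) = e^{2πiτ(M−r)²/(4M)} e^{2πiz(M−r)} ϑ(2Mz − 1/2 + (M−r)τ ; 2Mτ). -/

import Mathlib

/-!
Completing the square shows that the summands of both sides are values of one function on `ℤ`,
`bilateralTerm`: the first partial theta function sums it over `n ≥ 0`, the second, with its
reflected parameters, over `n < 0`, and the full theta function with its prefactor sums it over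
all of `ℤ` after the shift `n ↦ n + 1`. Splitting the bilateral sum is justified by its absolute
convergence (`summable_bilateralTerm`), which comes from that of Mathlib's `jacobiTheta₂`.
-/

open Complex Real Filter Topology

/-- The Jacobi theta function `ϑ(z;τ) = Σ_{n ∈ ℤ+1/2} q^{n²/2} e^{2πin(z+1/2)}`. -/
noncomputable def thetaF (z τ : ℂ) : ℂ :=
  ∑' n : ℤ, Complex.exp (2 * ↑π * I * τ * ((n : ℂ) + 1/2) ^ 2 / 2 +
    2 * ↑π * I * ((n : ℂ) + 1/2) * (z + 1/2))

/-- The partial theta function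
`ϑ⁺_{r,ε,M}(z;τ) = Σ_{n≥0} (-1)^{nε} e^{2πi(2Mn-r)z} q^{(2Mn-r)²/(4M)}`. -/
noncomputable def thetaPlus (r : ℝ) (ε : ℕ) (M : ℝ) (z τ : ℂ) : ℂ :=
  ∑' n : ℕ, (-1 : ℂ) ^ (n * ε) * Complex.exp (2 * ↑π * I * (2 * (M : ℂ) * n - (r : ℂ)) * z) *
    Complex.exp (2 * ↑π * I * τ * (2 * (M : ℂ) * n - (r : ℂ)) ^ 2 / (4 * (M : ℂ)))

/-- The bilateral summand: the terms of both partial theta functions, and those of the full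
theta function up to its prefactor, are values of this single function of `n : ℤ`. -/
noncomputable def bilateralTerm (M r z τ : ℂ) (n : ℤ) : ℂ :=
  Complex.exp (2 * ↑π * I * (2 * M * n - r) * z +
    2 * ↑π * I * τ * (2 * M * n - r) ^ 2 / (4 * M))

/-- Expanding the square turns the bilateral summand into a constant multiple of a term of
Mathlib's two-variable Jacobi theta series with modulus `2Mτ`, which converges absolutely. -/
lemma summable_bilateralTerm {M : ℝ} (hM : 0 < M) (r : ℂ) {τ : ℂ} (hτ : 0 < τ.im) (z : ℂ) :
    Summable (bilateralTerm M r z τ) := by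
  have hM0 : (M : ℂ) ≠ 0 := by exact_mod_cast hM.ne'
  have him : 0 < (2 * (M : ℂ) * τ).im := by
    have : (2 * (M : ℂ) * τ).im = 2 * M * τ.im := by simp
    rw [this]; positivity
  have h := ((summable_jacobiTheta₂_term_iff (2 * (M : ℂ) * z - r * τ) (2 * M * τ)).2 him).mul_left
    (Complex.exp (-(2 * ↑π * I * r * z) + 2 * ↑π * I * τ * r ^ 2 / (4 * M)))
  refine h.congr fun n => ?_
  rw [bilateralTerm, jacobiTheta₂_term, ← Complex.exp_add]
  congr 1
  field_simp
  ring

/-- Completion of the partial theta function to a full theta function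
(used in the proof of Proposition 8.1). -/
theorem stmt15 (M : ℝ) (hM : ∃ m : ℕ, 0 < m ∧ M = (m : ℝ) / 2)
    (r : ℝ) (hr : ∃ k : ℤ, r = M + k) (τ : ℂ) (hτ : 0 < τ.im) (z : ℂ) :
    thetaPlus r 0 M z τ + thetaPlus (-r - 2 * M) 0 M (-z) τ =
      Complex.exp (2 * ↑π * I * τ * ((M : ℂ) - r) ^ 2 / (4 * (M : ℂ))) *
        Complex.exp (2 * ↑π * I * z * ((M : ℂ) - r)) *
        thetaF (2 * (M : ℂ) * z - 1 / 2 + ((M : ℂ) - r) * τ) (2 * (M : ℂ) * τ) := by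
  obtain ⟨m, hm, hMm⟩ := hM
  have hMpos : 0 < M := by
    rw [hMm]; positivity
  have hM0 : (M : ℂ) ≠ 0 := by exact_mod_cast hMpos.ne'
  have hs := summable_bilateralTerm hMpos (r : ℂ) hτ z
  have h1 : thetaPlus r 0 M z τ = ∑' n : ℕ, bilateralTerm M r z τ n := by
    refine tsum_congr fun n => ?_
    rw [bilateralTerm, mul_zero, pow_zero, one_mul, ← Complex.exp_add]
    push_cast
    rfl
  have h2 : thetaPlus (-r - 2 * M) 0 M (-z) τ =
      ∑' n : ℕ, bilateralTerm M r z τ (-((n : ℤ) + 1)) := by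
    refine tsum_congr fun n => ?_
    rw [bilateralTerm, mul_zero, pow_zero, one_mul, ← Complex.exp_add]
    congr 1
    push_cast
    ring
  -- The half-integer index `n + 1/2` of the full theta function corresponds to `n + 1` here.
  have h3 : Complex.exp (2 * ↑π * I * τ * ((M : ℂ) - r) ^ 2 / (4 * (M : ℂ))) *
        Complex.exp (2 * ↑π * I * z * ((M : ℂ) - r)) *
        thetaF (2 * (M : ℂ) * z - 1 / 2 + ((M : ℂ) - r) * τ) (2 * (M : ℂ) * τ) =
      ∑' n : ℤ, bilateralTerm M r z τ (n + 1) := by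
    rw [thetaF, ← tsum_mul_left]
    refine tsum_congr fun n => ?_
    rw [bilateralTerm, ← Complex.exp_add, ← Complex.exp_add]
    congr 1
    push_cast
    field_simp
    ring
  have h4 : ∑' n : ℤ, bilateralTerm M r z τ (n + 1) = ∑' n : ℤ, bilateralTerm M r z τ n :=
    (Equiv.addRight (1 : ℤ)).tsum_eq (bilateralTerm M r z τ)
  have hpos : Summable fun n : ℕ => bilateralTerm M r z τ n :=
    hs.comp_injective Nat.cast_injective
  have hneg : Summable fun n : ℕ => bilateralTerm M r z τ (-((n : ℤ) + 1)) :=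
    hs.comp_injective (i := fun n : ℕ => -((n : ℤ) + 1)) fun a b h => by
      simpa using h
  rw [h1, h2, h3, h4]
  exact (tsum_of_nat_of_neg_add_one hpos hneg).symm
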